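/- Let n ≥ 1. The map φ, sending an n-periodic edge set Ē on ℤ to the edge set {{a mod 4n, b mod 4n} : [a,b] ∈ Ē} on the 4n-gon, restricts to a bijection between n-periodic 2-triangulations on ℤ (equivalently, 2-triangulations on the half-cylinder with n marked points) and n-periodic 2-triangulations on the 4n-gon (2-triangulations on the 4n-gon invariant under rotation by π/2 radians, i.e., under v ↦ v+n). -/

import Mathlib

/- Edges on the universal cover of the half-cylinder, modeled by the integers.
   An edge is an unordered pair of distinct integers, represented as an ordered
   pair `(a, b)` with `a < b` (validity). -/

namespace Multitriangulation

abbrev Edge := ℤ × ℤ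

/-- Translate an edge by `t`: `[a,b] + t = [a+t, b+t]`. -/
def shift (e : Edge) (t : ℤ) : Edge := (e.1 + t, e.2 + t)

/-- Two edges (as unordered pairs of integers) cross:
their endpoints strictly interleave. -/
def Crosses (e f : Edge) : Prop :=
  (min e.1 e.2 < min f.1 f.2 ∧ min f.1 f.2 < max e.1 e.2 ∧ max e.1 e.2 < max f.1 f.2) ∨
  (min f.1 f.2 < min e.1 e.2 ∧ min e.1 e.2 < max f.1 f.2 ∧ max f.1 f.2 < max e.1 e.2)

/-- A finite set of edges is an `l`-crossing if it consists of `l` pairwise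
crossing edges. -/
def IsCrossing (l : ℕ) (S : Finset Edge) : Prop :=
  S.card = l ∧ ∀ e ∈ S, ∀ f ∈ S, e ≠ f → Crosses e f

/-- A set of edges is `l`-crossing-free if no `l` of its edges pairwise cross. -/
def CrossingFree (l : ℕ) (E : Set Edge) : Prop :=
  ¬ ∃ S : Finset Edge, ↑S ⊆ E ∧ IsCrossing l S

/-- A set of edges is `n`-periodic if `e ∈ E ↔ e + n ∈ E`. -/
def Periodic (n : ℕ) (E : Set Edge) : Prop := ∀ e, e ∈ E ↔ shift e (n : ℤ) ∈ E

/-- All members are genuine edges `[a,b]` with `a < b`. -/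
def ValidEdges (E : Set Edge) : Prop := ∀ e ∈ E, e.1 < e.2

/-- An `n`-periodic `k`-triangulation on `ℤ`: an `n`-periodic
`(k+1)`-crossing-free set of edges that is maximal under inclusion among
`n`-periodic `(k+1)`-crossing-free sets of edges. -/
def IsTriangulation (n k : ℕ) (T : Set Edge) : Prop :=
  ValidEdges T ∧ Periodic n T ∧ CrossingFree (k+1) T ∧
  ∀ T', ValidEdges T' → Periodic n T' → CrossingFree (k+1) T' → T ⊆ T' → T' = T

/-- Interleaving of representatives `0 ≤ a < b < m`, `0 ≤ c < d < m`:
`a<c<b<d` or `c<a<d<b` (formulated symmetrically via `min`/`max`). -/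
def crossIndex (a b c d : ℕ) : Prop :=
  (min a b < min c d ∧ min c d < max a b ∧ max a b < max c d) ∨
  (min c d < min a b ∧ min a b < max c d ∧ max c d < max a b)

/-- Two edges of the `m`-gon (vertices labeled by `ZMod m`) cross: their
endpoints interleave in cyclic order, via the representatives in `[0, m)`. -/
def PolyCrosses {m : ℕ} (e f : Sym2 (ZMod m)) : Prop :=
  ∃ x y z w : ZMod m, e = s(x, y) ∧ f = s(z, w) ∧ crossIndex x.val y.val z.val w.val

/-- A finite set of polygon edges is an `l`-crossing if it consists of `l`
pairwise crossing edges. -/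
def PolyIsCrossing {m : ℕ} (l : ℕ) (S : Finset (Sym2 (ZMod m))) : Prop :=
  S.card = l ∧ ∀ e ∈ S, ∀ f ∈ S, e ≠ f → PolyCrosses e f

/-- A set of polygon edges is `l`-crossing-free. -/
def PolyCrossingFree {m : ℕ} (l : ℕ) (E : Set (Sym2 (ZMod m))) : Prop :=
  ¬ ∃ S : Finset (Sym2 (ZMod m)), ↑S ⊆ E ∧ PolyIsCrossing l S

/-- Invariance under the rotation `v ↦ v + n`. -/
def PolyPeriodic (n : ℕ) {m : ℕ} (T : Set (Sym2 (ZMod m))) : Prop :=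
  ∀ e, e ∈ T ↔ Sym2.map (· + (n : ZMod m)) e ∈ T

/-- All members are genuine edges (pairs of distinct vertices). -/
def PolyValid {m : ℕ} (T : Set (Sym2 (ZMod m))) : Prop := ∀ e ∈ T, ¬ e.IsDiag

/-- A `2`-triangulation on the `m`-gon: a 3-crossing-free set of edges,
maximal under inclusion among 3-crossing-free sets of edges. -/
def IsPolyTriangulation {m : ℕ} (T : Set (Sym2 (ZMod m))) : Prop :=
  PolyValid T ∧ PolyCrossingFree 3 T ∧
  ∀ T', PolyValid T' → PolyCrossingFree 3 T' → T ⊆ T' → T' = T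

/-- The projection `φ` sending an edge set on `ℤ` to an edge set on the
`4n`-gon: `[a,b] ↦ {a mod 4n, b mod 4n}`. -/
def phi (n : ℕ) (E : Set Edge) : Set (Sym2 (ZMod (4 * n))) :=
  {x | ∃ e ∈ E, x = s(((e.1 : ZMod (4 * n))), ((e.2 : ZMod (4 * n))))}

/-!
The edges of an `n`-periodic 3-crossing-free set `E` on `ℤ` have length at most `2n`, since a longer
edge `e` would cross `e + n` and `e + 2n`. Two such edges cross in the `4n`-gon exactly when some of
their translates by multiples of `4n` cross in `ℤ`. Three edges of `E` cannot wind once around the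
circle of length `4n`, so every 3-crossing of `phi n E` lifts to a 3-crossing of `E`, and `phi n` is
an inclusion-preserving bijection from the periodic 3-crossing-free sets on `ℤ` to those on the
`4n`-gon. In particular it preserves maximality among periodic sets.

A set on the `4n`-gon which is maximal among periodic 3-crossing-free sets is even maximal among all
3-crossing-free sets. This amounts to the following property of an `n`-periodic 2-triangulation `E`
of `ℤ`: an edge of length at most `2n` which forms no 3-crossing with two edges of `E` lies in `E`,
although a priori its translates by multiples of `n` could form a 3-crossing together with an edge
of `E`.
-/

section PairwiseTriples

variable {α : Type*} {r : α → α → Prop}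

lemma not_exists_pairwise_triple_iff [Std.Symm r] [Std.Irrefl r] {E : Set α} :
    (¬ ∃ S : Finset α, ↑S ⊆ E ∧ S.card = 3 ∧ ∀ e ∈ S, ∀ f ∈ S, e ≠ f → r e f) ↔
      ∀ e ∈ E, ∀ f ∈ E, ∀ g ∈ E, r e f → r e g → ¬ r f g := by
  classical
  let G : SimpleGraph α := { Adj := r }
  constructor
  · intro h e he f hf g hg hef heg hfg
    have hclique : G.IsNClique 3 {e, f, g} :=
      SimpleGraph.is3Clique_triple_iff.2 ⟨hef, heg, hfg⟩
    refine h ⟨{e, f, g}, ?_, hclique.card_eq, fun x hx y hy => hclique.isClique hx hy⟩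
    simp [Set.insert_subset_iff, he, hf, hg]
  · rintro h ⟨S, hSE, hcard, hS⟩
    have hclique : G.IsNClique 3 S := ⟨fun x hx y hy => hS x hx y hy, hcard⟩
    obtain ⟨e, f, g, hef, heg, hfg, rfl⟩ := SimpleGraph.is3Clique_iff.1 hclique
    exact h e (hSE (by simp)) f (hSE (by simp)) g (hSE (by simp)) hef heg hfg

end PairwiseTriples

section IntegerEdges

variable {n k : ℕ} {E F : Set Edge} {e f g : Edge} {s t : ℤ}

instance : Std.Symm Crosses := ⟨fun _ _ => Or.symm⟩

instance : Std.Irrefl Crosses := ⟨fun e h => by unfold Crosses at h; omega⟩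

/-- `[a,b]` crosses `[c,d]` from the left if `a < c < b < d`. -/
def CrossesFromLeft (e f : Edge) : Prop := e.1 < f.1 ∧ f.1 < e.2 ∧ e.2 < f.2

lemma CrossesFromLeft.crosses (h : CrossesFromLeft e f) : Crosses e f := by
  unfold CrossesFromLeft at h
  unfold Crosses
  omega

lemma CrossesFromLeft.crosses' (h : CrossesFromLeft e f) : Crosses f e := symm h.crosses

lemma crosses_iff (he : e.1 < e.2) (hf : f.1 < f.2) :
    Crosses e f ↔ CrossesFromLeft e f ∨ CrossesFromLeft f e := by
  simp only [Crosses, CrossesFromLeft, min_eq_left he.le, max_eq_right he.le, min_eq_left hf.le,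
    max_eq_right hf.le]

lemma shift_zero : shift e 0 = e := by simp [shift]

lemma shift_shift : shift (shift e s) t = shift e (s + t) := by simp only [shift, add_assoc]

lemma crosses_shift_iff : Crosses (shift e t) (shift f t) ↔ Crosses e f := by
  simp only [Crosses, shift]
  omega

lemma crosses_shift_left_iff : Crosses (shift e t) f ↔ Crosses e (shift f (-t)) := by
  simp only [Crosses, shift]
  omega

lemma crosses_shift_shift_iff (he : e.1 < e.2) :
    Crosses (shift e s) (shift e t) ↔ s ≠ t ∧ |s - t| < e.2 - e.1 := by
  rw [abs_lt, crosses_iff (by simpa [shift]) (by simpa [shift])]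
  simp only [CrossesFromLeft, shift]
  omega

lemma crossingFree_three_iff : CrossingFree 3 E ↔
    ∀ e ∈ E, ∀ f ∈ E, ∀ g ∈ E, Crosses e f → Crosses e g → ¬ Crosses f g :=
  not_exists_pairwise_triple_iff

/-- An edge is compatible with `E` if it forms no 3-crossing with two edges of `E`. -/
def Compatible (E : Set Edge) (e : Edge) : Prop :=
  ∀ f ∈ E, ∀ g ∈ E, Crosses e f → Crosses e g → ¬ Crosses f g

lemma crossingFree_three_union (hE : CrossingFree 3 E) (hF : CrossingFree 3 F)
    (hFE : ∀ e ∈ F, Compatible E e) (hEF : ∀ e ∈ E, Compatible F e) :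
    CrossingFree 3 (E ∪ F) := by
  rw [crossingFree_three_iff] at hE hF ⊢
  rintro e (he | he) f (hf | hf) g (hg | hg) hef heg hfg
  · exact hE e he f hf g hg hef heg hfg
  · exact hFE g hg e he f hf (symm heg) (symm hfg) hef
  · exact hFE f hf e he g hg (symm hef) hfg heg
  · exact hEF e he f hf g hg hef heg hfg
  · exact hFE e he f hf g hg hef heg hfg
  · exact hEF f hf e he g hg (symm hef) hfg heg
  · exact hEF g hg e he f hf (symm heg) (symm hfg) hef
  · exact hF e he f hf g hg hef heg hfg

lemma Periodic.shift_mem_iff (hE : Periodic n E) (hs : (n : ℤ) ∣ s) : shift e s ∈ E ↔ e ∈ E := by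
  obtain ⟨i, rfl⟩ := hs
  have hper : Function.Periodic (fun x => shift e x ∈ E) (n : ℤ) := fun x => by
    simpa only [shift_shift] using propext (hE (shift e x)).symm
  simpa [shift, mul_comm] using hper.int_mul i 0

lemma Compatible.shift (hE : Periodic n E) (he : Compatible E e) (hs : (n : ℤ) ∣ s) :
    Compatible E (shift e s) := by
  intro f hf g hg hef heg hfg
  exact he _ ((hE.shift_mem_iff hs.neg_right).2 hf) _ ((hE.shift_mem_iff hs.neg_right).2 hg)
    (crosses_shift_left_iff.1 hef) (crosses_shift_left_iff.1 heg) (crosses_shift_iff.2 hfg)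

-- A longer edge would cross its translates by `n, 2n, …, kn`, and these would cross each other.
lemma Periodic.length_le (hn : 1 ≤ n) (hE : Periodic n E) (hfree : CrossingFree (k + 1) E)
    (he : e ∈ E) : e.2 - e.1 ≤ k * n := by
  by_contra! hlong
  have hvalid : e.1 < e.2 := by
    have : (0 : ℤ) ≤ k * n := by positivity
    omega
  have hinj : Function.Injective fun i : ℕ => shift e (n * i) := fun i j hij => by
    have : (n : ℤ) * i = n * j := add_left_cancel (congrArg Prod.fst hij)
    exact_mod_cast mul_left_cancel₀ (by omega) this
  refine hfree ⟨(Finset.range (k + 1)).image fun i : ℕ => shift e (n * i), ?_, ?_, ?_⟩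
  · simp only [Finset.coe_image, Set.image_subset_iff]
    exact fun i _ => (hE.shift_mem_iff ⟨i, rfl⟩).2 he
  · rw [Finset.card_image_of_injective _ hinj, Finset.card_range]
  · simp only [Finset.forall_mem_image, Finset.mem_range]
    intro i hi j hj hij
    refine (crosses_shift_shift_iff hvalid).2 ⟨fun h => hij (by rw [h]), ?_⟩
    have hdist : |(i : ℤ) - j| ≤ k := by
      rw [abs_le]
      omega
    calc |(n : ℤ) * i - n * j| = |(i : ℤ) - j| * n := by
          rw [← mul_sub, abs_mul, Nat.abs_cast, mul_comm]
      _ ≤ k * n := by gcongr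
      _ < e.2 - e.1 := hlong

/-- `IsAdmissible n k E`: `E` is one of the `n`-periodic `(k+1)`-crossing-free sets of edges among
which the `n`-periodic `k`-triangulations are the maximal ones. -/
structure IsAdmissible (n k : ℕ) (E : Set Edge) : Prop where
  valid : ValidEdges E
  periodic : Periodic n E
  crossingFree : CrossingFree (k + 1) E

lemma isTriangulation_iff_maximal : IsTriangulation n k E ↔ Maximal (IsAdmissible n k) E := by
  rw [maximal_subset_iff]
  exact ⟨fun ⟨hv, hp, hc, hmax⟩ =>
      ⟨⟨hv, hp, hc⟩, fun T hT hET => (hmax T hT.valid hT.periodic hT.crossingFree hET).symm⟩,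
    fun ⟨h, hmax⟩ => ⟨h.valid, h.periodic, h.crossingFree,
      fun _ hv hp hc hET => (hmax ⟨hv, hp, hc⟩ hET).symm⟩⟩

/-- An edge is `m`-short if its length is at most `m / 2`. These are the edges of `ℤ` that represent
the edges of the `m`-gon by a shorter boundary arc. -/
def IsShort (m : ℕ) (e : Edge) : Prop := e.1 < e.2 ∧ 2 * (e.2 - e.1) ≤ m

lemma isShort_shift_iff {m : ℕ} : IsShort m (shift e t) ↔ IsShort m e := by
  simp only [IsShort, shift]
  omega

lemma IsAdmissible.isShort (hn : 1 ≤ n) (hE : IsAdmissible n 2 E) (he : e ∈ E) :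
    IsShort (4 * n) e := by
  have hlen := hE.periodic.length_le hn hE.crossingFree he
  exact ⟨hE.valid e he, by push_cast at hlen ⊢; omega⟩

/-- The orbit of an edge under translation by multiples of `n`. -/
def orbit (n : ℕ) (e : Edge) : Set Edge := {f | ∃ s : ℤ, (n : ℤ) ∣ s ∧ f = shift e s}

lemma mem_orbit_self : e ∈ orbit n e := ⟨0, dvd_zero _, shift_zero.symm⟩

lemma periodic_orbit : Periodic n (orbit n e) := by
  intro f
  constructor
  · rintro ⟨s, hs, rfl⟩
    exact ⟨s + n, dvd_add_self_right.2 hs, shift_shift⟩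
  · rintro ⟨s, hs, hf⟩
    refine ⟨s - n, dvd_sub_self_right.2 hs, ?_⟩
    simpa only [shift_shift, add_neg_cancel, shift_zero, sub_eq_add_neg] using
      congrArg (shift · (-n)) hf

lemma eq_add_or_eq_add_of_crosses_shift (he : IsShort (4 * n) e) (hs : (n : ℤ) ∣ s)
    (ht : (n : ℤ) ∣ t) (h : Crosses (shift e s) (shift e t)) : t = s + n ∨ s = t + n := by
  obtain ⟨hvalid, hlen⟩ := he
  push_cast at hlen
  obtain ⟨hne, hdist⟩ := (crosses_shift_shift_iff hvalid).1 h
  rw [abs_lt] at hdist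
  have eq_of_pos : ∀ x : ℤ, (n : ℤ) ∣ x → 0 < x → x < 2 * n → x = n := by
    intro x hx hpos hlt
    have hle := Int.le_of_dvd hpos hx
    by_contra
    have := Int.le_of_dvd (by omega) (dvd_sub_self_right.2 hx)
    omega
  rcases lt_or_gt_of_ne hne with hst | hst
  · have := eq_of_pos (t - s) (dvd_sub ht hs) (by omega) (by omega)
    omega
  · have := eq_of_pos (s - t) (dvd_sub hs ht) (by omega) (by omega)
    omega

lemma crossingFree_orbit (he : IsShort (4 * n) e) : CrossingFree 3 (orbit n e) := by
  rw [crossingFree_three_iff]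
  rintro _ ⟨s, hs, rfl⟩ _ ⟨t, ht, rfl⟩ _ ⟨u, hu, rfl⟩ hst hsu htu
  have hn : 0 < n := by
    unfold IsShort at he
    omega
  have := eq_add_or_eq_add_of_crosses_shift he hs ht hst
  have := eq_add_or_eq_add_of_crosses_shift he hs hu hsu
  have := eq_add_or_eq_add_of_crosses_shift he ht hu htu
  omega

-- Crossing translates of `e` are consecutive, so up to translation they are `e` and `e + n`.
lemma compatible_orbit (hE : Periodic n E) (he : IsShort (4 * n) e)
    (h : ∀ f ∈ E, Crosses f e → Crosses f (shift e n) → ¬ Crosses e (shift e n)) :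
    ∀ f ∈ E, Compatible (orbit n e) f := by
  have consecutive : ∀ f ∈ E, ∀ s : ℤ, (n : ℤ) ∣ s → Crosses f (shift e s) →
      Crosses f (shift e (s + n)) → ¬ Crosses (shift e s) (shift e (s + n)) := by
    intro f hf s hs h₁ h₂ h₁₂
    have hshift : shift e (s + n) = shift (shift e n) s := by rw [shift_shift, add_comm]
    rw [hshift] at h₂ h₁₂
    exact h _ ((hE.shift_mem_iff hs.neg_right).2 hf) (symm (crosses_shift_left_iff.1 (symm h₁)))
      (symm (crosses_shift_left_iff.1 (symm h₂))) (crosses_shift_iff.1 h₁₂)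
  rintro f hf _ ⟨s, hs, rfl⟩ _ ⟨t, ht, rfl⟩ hfs hft hst
  rcases eq_add_or_eq_add_of_crosses_shift he hs ht hst with rfl | rfl
  · exact consecutive f hf s hs hfs hft hst
  · exact consecutive f hf t ht hft hfs (symm hst)

lemma IsAdmissible.union_orbit (hE : IsAdmissible n 2 E) (he : IsShort (4 * n) e)
    (hcomp : Compatible E e) (horbit : ∀ f ∈ E, Compatible (orbit n e) f) :
    IsAdmissible n 2 (E ∪ orbit n e) where
  valid := by
    rintro f (hf | ⟨s, -, rfl⟩)
    exacts [hE.valid f hf, (isShort_shift_iff.2 he).1]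
  periodic f := or_congr (hE.periodic f) (periodic_orbit f)
  crossingFree := by
    refine crossingFree_three_union hE.crossingFree (crossingFree_orbit he) ?_ horbit
    rintro _ ⟨s, hs, rfl⟩
    exact hcomp.shift hE.periodic hs

lemma mem_of_compatible_of_compatible_orbit (hE : Maximal (IsAdmissible n 2) E)
    (he : IsShort (4 * n) e) (hcomp : Compatible E e)
    (horbit : ∀ f ∈ E, Compatible (orbit n e) f) : e ∈ E :=
  hE.le_of_ge (hE.prop.union_orbit he hcomp horbit) Set.subset_union_left (Or.inr mem_orbit_self)

/-- A bridge over `e = [p,q]` is an edge `[c,d]` with `p < c < p + n < q < d ≤ c + n`. This is the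
only position in which an edge of a periodic set can cross both `e` and `e + n` when these cross and
`e` is compatible with the set. -/
structure IsBridge (n : ℕ) (e f : Edge) : Prop where
  lt_left : e.1 < f.1
  left_lt : f.1 < e.1 + n
  lt_right : e.1 + n < e.2
  right_lt : e.2 < f.2
  length_le : f.2 ≤ f.1 + n

section Bridge

variable {p q c d x y x' y' : ℤ}

-- In any other position `f = [c,d]` is longer than `n`, hence crosses `f + n` and `f - n`, and one
-- of these completes a 3-crossing with `e = [p,q]` and `f`.
lemma isBridge_of_crosses (hE : Periodic n E) (he : IsShort (4 * n) (p, q))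
    (hcomp : Compatible E (p, q)) (hf : (c, d) ∈ E) (hfshort : IsShort (4 * n) (c, d))
    (h₁ : Crosses (c, d) (p, q)) (h₂ : Crosses (c, d) (p + n, q + n))
    (h₁₂ : Crosses (p, q) (p + n, q + n)) : IsBridge n (p, q) (c, d) := by
  have hadd : (c + n, d + n) ∈ E := (hE.shift_mem_iff dvd_rfl).2 hf
  have hsub : (c - n, d - n) ∈ E := (hE.shift_mem_iff (dvd_refl _).neg_right).2 hf
  have h₁' := (crosses_iff hfshort.1 he.1).1 h₁
  rw [crosses_iff he.1 (by simpa using he.1)] at h₁₂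
  rw [crosses_iff hfshort.1 (by simpa using he.1)] at h₂
  simp only [IsShort, CrossesFromLeft] at he hfshort h₁' h₂ h₁₂
  push_cast at he hfshort
  rcases h₁' with ⟨hcp, hpd, hdq⟩ | ⟨hpc, hcq, hqd⟩
  · have hlong : c + n < d := by omega
    exact (hcomp _ hf _ hadd (symm h₁) (CrossesFromLeft.crosses ⟨by omega, by omega, by omega⟩)
      (CrossesFromLeft.crosses ⟨by omega, hlong, by omega⟩)).elim
  by_cases hdc : d ≤ c + n
  · exact ⟨hpc, by omega, by omega, hqd, hdc⟩
  have hself : Crosses (c, d) (c - n, d - n) :=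
    CrossesFromLeft.crosses' ⟨by omega, by omega, by omega⟩
  rcases h₂ with h₂ | h₂
  · exact (hcomp _ hf _ hsub (symm h₁)
      (CrossesFromLeft.crosses' ⟨by omega, by omega, by omega⟩) hself).elim
  · exact (hcomp _ hf _ hsub (symm h₁)
      (CrossesFromLeft.crosses ⟨by omega, by omega, by omega⟩) hself).elim

-- Otherwise `[x,y]`, the bridge and `e + n` form a 3-crossing.
lemma IsBridge.le_left_of_mem (hbridge : IsBridge n (p, q) (c, d)) (hE : Periodic n E)
    (hcomp : Compatible E (p, q)) (hf : (c, d) ∈ E)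
    (hg : (x, y) ∈ E) (hy : p + n < y) (hyq : y ≤ q) : c ≤ x := by
  obtain ⟨-, hcp, hpq, hqd, hdc⟩ := hbridge
  have hcomp' : Compatible E (p + n, q + n) := hcomp.shift hE dvd_rfl
  by_contra! hxc
  exact hcomp' _ hg _ hf (CrossesFromLeft.crosses' ⟨by omega, hy, by omega⟩)
    (CrossesFromLeft.crosses' ⟨hcp, by omega, by omega⟩)
    (CrossesFromLeft.crosses ⟨hxc, by omega, by omega⟩)

lemma IsBridge.not_both_right (hbridge : IsBridge n (p, q) (c, d)) (hE : Periodic n E)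
    (hcomp : Compatible E (p, q)) (hf : (c, d) ∈ E)
    (hg : (x, y) ∈ E) (hg' : (x', y') ∈ E)
    (h : CrossesFromLeft (p, p + n) (x, y)) (h' : CrossesFromLeft (p, p + n) (x', y')) :
    ¬ CrossesFromLeft (x, y) (x', y') := by
  rintro ⟨hxx', hx'y, hyy'⟩
  obtain ⟨hpx, hxp, hy⟩ := h
  obtain ⟨hpx', hx'p, hy'⟩ := h'
  have hcomp' : Compatible E (p + n, q + n) := hcomp.shift hE dvd_rfl
  have hcross : Crosses (x, y) (x', y') := CrossesFromLeft.crosses ⟨hxx', hx'y, hyy'⟩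
  have hpq : p + n < q := hbridge.lt_right
  have hyq : y ≤ q := by
    by_contra! hqy
    exact hcomp _ hg _ hg' (CrossesFromLeft.crosses ⟨hpx, by omega, hqy⟩)
      (CrossesFromLeft.crosses ⟨hpx', by omega, by omega⟩) hcross
  have hcx : c ≤ x := hbridge.le_left_of_mem hE hcomp hf hg hy hyq
  obtain ⟨hpc, -, -, hqd, hdc⟩ := hbridge
  have hy'd : y' ≤ d := by
    by_contra! hdy'
    exact hcomp _ hf _ hg' (CrossesFromLeft.crosses ⟨hpc, by omega, hqd⟩)
      (CrossesFromLeft.crosses ⟨hpx', by omega, by omega⟩)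
      (CrossesFromLeft.crosses ⟨by omega, by omega, hdy'⟩)
  exact hcomp' _ hg _ hg' (CrossesFromLeft.crosses' ⟨hxp, hy, by omega⟩)
    (CrossesFromLeft.crosses' ⟨hx'p, hy', by omega⟩) hcross

lemma IsBridge.not_left_right (hbridge : IsBridge n (p, q) (c, d)) (hE : Periodic n E)
    (hcomp : Compatible E (p, q)) (hf : (c, d) ∈ E)
    (hg : (x, y) ∈ E) (hg' : (x', y') ∈ E)
    (h : CrossesFromLeft (p, p + n) (x, y)) (h' : CrossesFromLeft (x', y') (p, p + n)) :
    ¬ Crosses (x, y) (x', y') := by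
  intro hcross
  have hpq := hbridge.lt_right
  obtain ⟨hpx, hxp, hy⟩ := h
  obtain ⟨hx'p, hpy', hy'p⟩ := h'
  have hxy' : x < y' := by
    unfold Crosses at hcross
    omega
  have hyq : y ≤ q := by
    by_contra! hqy
    exact hcomp _ hg _ hg' (CrossesFromLeft.crosses ⟨hpx, by omega, hqy⟩)
      (CrossesFromLeft.crosses' ⟨hx'p, hpy', by omega⟩) hcross
  have hcx : c ≤ x := hbridge.le_left_of_mem hE hcomp hf hg hy hyq
  obtain ⟨hpc, hcp, -, hqd, -⟩ := hbridge
  exact hcomp _ hf _ hg' (CrossesFromLeft.crosses ⟨hpc, by omega, hqd⟩)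
    (CrossesFromLeft.crosses' ⟨hx'p, hpy', by omega⟩)
    (CrossesFromLeft.crosses' ⟨by omega, by omega, by omega⟩)

lemma IsBridge.compatible (hbridge : IsBridge n (p, q) (c, d)) (hE : Periodic n E)
    (hcomp : Compatible E (p, q)) (hf : (c, d) ∈ E) (hvalid : ValidEdges E) :
    Compatible E (p, p + n) := by
  have hpn : p < p + n := hbridge.lt_left.trans hbridge.left_lt
  have hpq : p + n < q := hbridge.lt_right
  rintro ⟨x, y⟩ hg ⟨x', y'⟩ hg' h h' hgg'
  rw [crosses_iff hpn (hvalid _ hg)] at h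
  rw [crosses_iff hpn (hvalid _ hg')] at h'
  rcases h with h | h <;> rcases h' with h' | h'
  · rcases (crosses_iff (hvalid _ hg) (hvalid _ hg')).1 hgg' with hl | hl
    · exact hbridge.not_both_right hE hcomp hf hg hg' h h' hl
    · exact hbridge.not_both_right hE hcomp hf hg' hg h' h hl
  · exact hbridge.not_left_right hE hcomp hf hg hg' h h' hgg'
  · exact hbridge.not_left_right hE hcomp hf hg' hg h' h (symm hgg')
  · exact hcomp _ hg _ hg' (CrossesFromLeft.crosses' ⟨h.1, h.2.1, h.2.2.trans hpq⟩)
      (CrossesFromLeft.crosses' ⟨h'.1, h'.2.1, h'.2.2.trans hpq⟩) hgg'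

end Bridge

-- If some edge prevents the orbit of `[p,q]` from being added to `E`, it is a bridge. Then the edge
-- `[p,p+n]` can be added and hence lies in `E`, but its translate by `n` forms a 3-crossing with
-- the bridge and `[p,q]`.
lemma mem_of_compatible (hn : 1 ≤ n) (hE : Maximal (IsAdmissible n 2) E)
    (he : IsShort (4 * n) e) (hcomp : Compatible E e) : e ∈ E := by
  obtain ⟨p, q⟩ := e
  have hper := hE.prop.periodic
  refine mem_of_compatible_of_compatible_orbit hE he hcomp (compatible_orbit hper he ?_)
  rintro ⟨c, d⟩ hf h₁ h₂ h₁₂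
  have hbridge := isBridge_of_crosses hper he hcomp hf (hE.prop.isShort hn hf) h₁ h₂ h₁₂
  have hcomp' : Compatible E (p, p + n) := hbridge.compatible hper hcomp hf hE.prop.valid
  have hshort : IsShort (4 * n) (p, p + n) := by
    constructor <;> push_cast <;> omega
  have hmem : (p, p + n) ∈ E := by
    refine mem_of_compatible_of_compatible_orbit hE hshort hcomp'
      (compatible_orbit hper hshort fun _ _ _ _ h => ?_)
    simp only [Crosses, shift] at h
    omega
  have hmem' : (p + n, p + n + n) ∈ E := (hper.shift_mem_iff dvd_rfl).2 hmem
  obtain ⟨-, hcp, hpq, hqd, hdc⟩ := hbridge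
  exact hcomp _ hf _ hmem' (symm h₁) (CrossesFromLeft.crosses ⟨by omega, hpq, by omega⟩)
    (CrossesFromLeft.crosses ⟨hcp, by omega, by omega⟩)

-- If three edges wound around the circle of length `4n`, a longest one `e` would cross `e + n` and
-- `e - n`, which therefore cross neither `f` nor `g - 4n`. So `f` ends no later than `e + n`, and
-- `g - 4n` starts no earlier than `e - n`, which leaves a gap between `f` and `g`.
lemma not_crossesFromLeft_cyclic_of_longest (hE : Periodic n E) (hfree : CrossingFree 3 E)
    (he : e ∈ E) (hf : f ∈ E) (hg : g ∈ E) (hlen : e.2 - e.1 ≤ 2 * n)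
    (hfe : f.2 - f.1 ≤ e.2 - e.1) (hge : g.2 - g.1 ≤ e.2 - e.1)
    (hef : CrossesFromLeft e f) (hfg : CrossesFromLeft f g) :
    ¬ CrossesFromLeft g (shift e (4 * n)) := by
  intro hwind
  rw [crossingFree_three_iff] at hfree
  have hadd : shift e n ∈ E := (hE.shift_mem_iff dvd_rfl).2 he
  have hsub : shift e (-n) ∈ E := (hE.shift_mem_iff (dvd_refl _).neg_right).2 he
  have hg' : shift g (-(4 * n)) ∈ E := (hE.shift_mem_iff (dvd_mul_left _ _).neg_right).2 hg
  have hright := hfree e he f hf _ hadd hef.crosses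
  have hleft := hfree e he _ hg' _ hsub
    (symm (crosses_shift_left_iff.2 (by simpa using hwind.crosses)))
  unfold CrossesFromLeft shift at *
  have hlong : n < e.2 - e.1 := by omega
  have hf_end : f.2 ≤ e.2 + n := by
    by_contra
    exact hright (CrossesFromLeft.crosses ⟨by omega, by omega, by omega⟩)
      (CrossesFromLeft.crosses' ⟨by omega, by omega, by omega⟩)
  have hg_start : e.1 - n ≤ g.1 - 4 * n := by
    by_contra
    exact hleft (CrossesFromLeft.crosses' ⟨by omega, by omega, by omega⟩)
      (CrossesFromLeft.crosses ⟨by omega, by omega, by omega⟩)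
  omega

-- The edges `f, g, e + 4n` and `g, e + 4n, f + 4n` wind around as well, so any of the three may be
-- taken to be the longest.
lemma not_crossesFromLeft_cyclic (hE : Periodic n E) (hfree : CrossingFree 3 E)
    (hlen : ∀ e ∈ E, e.2 - e.1 ≤ 2 * n) (he : e ∈ E) (hf : f ∈ E) (hg : g ∈ E)
    (hef : CrossesFromLeft e f) (hfg : CrossesFromLeft f g) :
    ¬ CrossesFromLeft g (shift e (4 * n)) := by
  intro hwind
  have he' : shift e (4 * n) ∈ E := (hE.shift_mem_iff (dvd_mul_left _ _)).2 he
  have hf' : shift f (4 * n) ∈ E := (hE.shift_mem_iff (dvd_mul_left _ _)).2 hf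
  have hef' : CrossesFromLeft (shift e (4 * n)) (shift f (4 * n)) := by
    simpa [CrossesFromLeft, shift] using hef
  have hfg' : CrossesFromLeft (shift f (4 * n)) (shift g (4 * n)) := by
    simpa [CrossesFromLeft, shift] using hfg
  have hshift : ∀ e : Edge, (shift e (4 * n)).2 - (shift e (4 * n)).1 = e.2 - e.1 := fun e => by
    simp [shift]
  by_cases he_max : f.2 - f.1 ≤ e.2 - e.1 ∧ g.2 - g.1 ≤ e.2 - e.1
  · exact not_crossesFromLeft_cyclic_of_longest hE hfree he hf hg (hlen e he) he_max.1 he_max.2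
      hef hfg hwind
  by_cases hf_max : g.2 - g.1 ≤ f.2 - f.1 ∧ e.2 - e.1 ≤ f.2 - f.1
  · exact not_crossesFromLeft_cyclic_of_longest hE hfree hf hg he' (hlen f hf) hf_max.1
      ((hshift e).trans_le hf_max.2) hfg hwind hef'
  · exact not_crossesFromLeft_cyclic_of_longest hE hfree hg he' hf' (hlen g hg)
      (by rw [hshift]; omega) (by rw [hshift]; omega) hwind hef' hfg'

lemma IsAdmissible.not_crosses_shift_four_mul (hn : 1 ≤ n) (hE : IsAdmissible n 2 E) (he : e ∈ E)
    (hf : f ∈ E) (hg : g ∈ E) (hef : Crosses e f) (heg : Crosses e g) :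
    ¬ Crosses f (shift g (4 * n)) := by
  intro hfg
  have hlen : ∀ e ∈ E, e.2 - e.1 ≤ 2 * n := fun e he =>
    mod_cast hE.periodic.length_le hn hE.crossingFree he
  have hef' := (crosses_iff (hE.valid e he) (hE.valid f hf)).1 hef
  have heg' := (crosses_iff (hE.valid e he) (hE.valid g hg)).1 heg
  have hfg' := (crosses_iff (hE.valid f hf) (by simpa [shift] using hE.valid g hg)).1 hfg
  refine not_crossesFromLeft_cyclic hE.periodic hE.crossingFree hlen hg he hf ?_ ?_ ?_ <;>
  · have := hlen e he
    have := hlen f hf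
    have := hlen g hg
    unfold CrossesFromLeft shift at *
    omega

lemma IsAdmissible.not_crosses_shift_mul (hn : 1 ≤ n) (hE : IsAdmissible n 2 E) (he : e ∈ E)
    (hf : f ∈ E) (hg : g ∈ E) (hef : Crosses e f) (heg : Crosses e g) :
    ¬ Crosses f (shift g (4 * n * t)) := by
  intro hfg
  have ht : |t| < 2 := by
    obtain ⟨he_lt, he_len⟩ := hE.isShort hn he
    obtain ⟨hf_lt, hf_len⟩ := hE.isShort hn hf
    obtain ⟨hg_lt, hg_len⟩ := hE.isShort hn hg
    simp only [Crosses, shift] at hef heg hfg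
    push_cast at he_len hf_len hg_len
    have h : |4 * n * t| < 4 * n * 2 := abs_lt.2 (by omega)
    rw [abs_mul, abs_of_nonneg (by positivity)] at h
    exact lt_of_mul_lt_mul_left h (by positivity)
  rw [abs_lt] at ht
  obtain rfl | rfl | rfl : t = -1 ∨ t = 0 ∨ t = 1 := by omega
  · refine hE.not_crosses_shift_four_mul hn he hg hf heg hef (symm (crosses_shift_left_iff.2 ?_))
    simpa using hfg
  · exact crossingFree_three_iff.1 hE.crossingFree e he f hf g hg hef heg
      (by simpa [shift_zero] using hfg)
  · exact hE.not_crosses_shift_four_mul hn he hf hg hef heg (by simpa using hfg)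

end IntegerEdges

section PolygonEdges

variable {m : ℕ} {e f : Edge} {x : Sym2 (ZMod m)} {U : Set (Sym2 (ZMod m))}

/-- The edge of the `m`-gon represented by an edge of `ℤ`. -/
def proj (m : ℕ) (e : Edge) : Sym2 (ZMod m) := s((e.1 : ZMod m), (e.2 : ZMod m))

lemma phi_eq_image (n : ℕ) : phi n = Set.image (proj (4 * n)) :=
  funext fun _ => Set.ext fun _ => exists_congr fun _ => and_congr_right fun _ => eq_comm

lemma proj_shift {t : ℤ} : proj m (shift e t) = (proj m e).map (· + (t : ZMod m)) := by
  simp [proj, shift]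

lemma proj_shift_mul {t : ℤ} : proj m (shift e (m * t)) = proj m e := by
  simp [proj, shift]

lemma polyCrosses_mk {a b c d : ZMod m} :
    PolyCrosses s(a, b) s(c, d) ↔ crossIndex a.val b.val c.val d.val := by
  constructor
  · rintro ⟨x, y, z, w, h₁, h₂, h⟩
    rw [Sym2.eq_iff] at h₁ h₂
    unfold crossIndex at h ⊢
    rcases h₁ with ⟨rfl, rfl⟩ | ⟨rfl, rfl⟩ <;> rcases h₂ with ⟨rfl, rfl⟩ | ⟨rfl, rfl⟩ <;> omega
  · exact fun h => ⟨a, b, c, d, rfl, rfl, h⟩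

instance : Std.Symm (PolyCrosses (m := m)) :=
  ⟨fun _ _ ⟨x, y, z, w, he, hf, h⟩ => ⟨z, w, x, y, hf, he, h.symm⟩⟩

instance : Std.Irrefl (PolyCrosses (m := m)) := ⟨fun x => by
  induction x with
  | _ a b => rw [polyCrosses_mk, crossIndex]; omega⟩

lemma polyCrossingFree_three_iff : PolyCrossingFree 3 U ↔
    ∀ x ∈ U, ∀ y ∈ U, ∀ z ∈ U, PolyCrosses x y → PolyCrosses x z → ¬ PolyCrosses y z :=
  not_exists_pairwise_triple_iff

lemma sbtw_iff_val [NeZero m] {a b c : ZMod m} : sbtw a b c ↔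
    a.val < b.val ∧ b.val < c.val ∨ b.val < c.val ∧ c.val < a.val ∨
      c.val < a.val ∧ a.val < b.val := by
  obtain ⟨k, rfl⟩ := Nat.exists_eq_succ_of_ne_zero (NeZero.ne m)
  exact Fin.sbtw_iff

lemma sbtw_add_right_iff [NeZero m] {a b c t : ZMod m} :
    sbtw (a + t) (b + t) (c + t) ↔ sbtw a b c := by
  have val_add_cases : ∀ a : ZMod m, (a + t).val = a.val + t.val ∨
      (a + t).val + m = a.val + t.val := fun a =>
    (lt_or_ge (a.val + t.val) m).imp ZMod.val_add_of_lt fun h => (ZMod.val_add_val_of_le h).symm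
  have hval_lt : ∀ a : ZMod m, a.val < m := ZMod.val_lt
  have := hval_lt a
  have := hval_lt b
  have := hval_lt c
  have := hval_lt (a + t)
  have := hval_lt (b + t)
  have := hval_lt (c + t)
  rw [sbtw_iff_val, sbtw_iff_val]
  rcases val_add_cases a with ha | ha <;> rcases val_add_cases b with hb | hb <;>
    rcases val_add_cases c with hc | hc <;> omega

lemma sbtw_intCast_iff [NeZero m] {a b c : ℤ} (hb : b ∈ Set.Ico a (a + m))
    (hc : c ∈ Set.Ico a (a + m)) : sbtw (a : ZMod m) b c ↔ a < b ∧ b < c := by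
  have val_sub : ∀ x ∈ Set.Ico a (a + m), (((x : ZMod m) + -a).val : ℤ) = x - a := fun x hx => by
    rw [← sub_eq_add_neg, ← Int.cast_sub, ZMod.val_intCast,
      Int.emod_eq_of_lt (sub_nonneg.2 hx.1) (sub_lt_iff_lt_add'.2 hx.2)]
  have hb_val := val_sub b hb
  have hc_val := val_sub c hc
  rw [← sbtw_add_right_iff (t := -(a : ZMod m)), sbtw_iff_val, add_neg_cancel, ZMod.val_zero]
  omega

lemma polyCrosses_mk_iff_sbtw [NeZero m] {a b c d : ZMod m} :
    PolyCrosses s(a, b) s(c, d) ↔ sbtw a c b ∧ sbtw a b d ∨ sbtw a d b ∧ sbtw a b c := by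
  simp only [polyCrosses_mk, crossIndex, sbtw_iff_val]
  omega

lemma polyCrosses_intCast_iff [NeZero m] {a b c d : ℤ} (hb : b ∈ Set.Ico a (a + m))
    (hc : c ∈ Set.Ico a (a + m)) (hd : d ∈ Set.Ico a (a + m)) :
    PolyCrosses s((a : ZMod m), (b : ZMod m)) s((c : ZMod m), (d : ZMod m)) ↔
      a < c ∧ c < b ∧ b < d ∨ a < d ∧ d < b ∧ b < c := by
  rw [polyCrosses_mk_iff_sbtw, sbtw_intCast_iff hc hb, sbtw_intCast_iff hb hd,
    sbtw_intCast_iff hd hb, sbtw_intCast_iff hb hc]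
  omega

lemma CrossesFromLeft.polyCrosses_proj [NeZero m] (h : CrossesFromLeft e f)
    (hlen : f.2 < e.1 + m) : PolyCrosses (proj m e) (proj m f) := by
  obtain ⟨h₁, h₂, h₃⟩ := h
  exact (polyCrosses_intCast_iff ⟨by omega, by omega⟩ ⟨by omega, by omega⟩
    ⟨by omega, by omega⟩).2 (Or.inl ⟨h₁, h₂, h₃⟩)

lemma IsShort.polyCrosses_proj [NeZero m] (he : IsShort m e) (hf : IsShort m f)
    (h : Crosses e f) : PolyCrosses (proj m e) (proj m f) := by
  obtain ⟨he_lt, he_len⟩ := he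
  obtain ⟨hf_lt, hf_len⟩ := hf
  rcases (crosses_iff he_lt hf_lt).1 h with hl | hl
  · exact hl.polyCrosses_proj (by unfold CrossesFromLeft at hl; omega)
  · exact symm (hl.polyCrosses_proj (by unfold CrossesFromLeft at hl; omega))

lemma IsShort.exists_crosses_shift [NeZero m] (he : IsShort m e) (hf : IsShort m f)
    (h : PolyCrosses (proj m e) (proj m f)) : ∃ t : ℤ, Crosses e (shift f (m * t)) := by
  obtain ⟨he_lt, he_len⟩ := he
  obtain ⟨hf_lt, hf_len⟩ := hf
  have hb : e.2 ∈ Set.Ico e.1 (e.1 + m) := ⟨he_lt.le, by omega⟩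
  have hm : (0 : ℤ) < m := by omega
  obtain ⟨t, ⟨hleft, hright⟩, -⟩ := existsUnique_add_zsmul_mem_Ico hm f.1 e.1
  simp only [smul_eq_mul, mul_comm t] at hleft hright
  by_cases hlt : f.2 + m * t < e.1 + m
  · have hd : f.2 + m * t ∈ Set.Ico e.1 (e.1 + m) := ⟨by omega, hlt⟩
    rw [← proj_shift_mul (e := f) (t := t)] at h
    have hcross := (polyCrosses_intCast_iff hb ⟨hleft, hright⟩ hd).1 h
    refine ⟨t, ?_⟩
    simp only [Crosses, shift] at hcross ⊢
    omega
  · have hd : f.2 + m * (t - 1) ∈ Set.Ico e.1 (e.1 + m) := by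
      rw [mul_sub]
      exact ⟨by omega, by omega⟩
    have hproj :
        proj m f = s(((f.1 + m * t : ℤ) : ZMod m), ((f.2 + m * (t - 1) : ℤ) : ZMod m)) := by
      simp [proj]
    rw [hproj, proj] at h
    have hcross := (polyCrosses_intCast_iff hb ⟨hleft, hright⟩ hd).1 h
    refine ⟨t - 1, ?_⟩
    simp only [Crosses, shift, mul_sub] at hcross ⊢
    omega

lemma IsShort.not_isDiag_proj (he : IsShort m e) : ¬ (proj m e).IsDiag := by
  obtain ⟨hlt, hlen⟩ := he
  rw [proj, Sym2.mk_isDiag_iff, ZMod.intCast_eq_intCast_iff_dvd_sub]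
  exact fun hdvd => by linarith [Int.le_of_dvd (by omega) hdvd]

lemma exists_isShort_proj_eq [NeZero m] (hx : ¬ x.IsDiag) : ∃ e, IsShort m e ∧ proj m e = x := by
  have of_val_le : ∀ a b : ZMod m, a ≠ b → 2 * (b - a).val ≤ m →
      ∃ e, IsShort m e ∧ proj m e = s(a, b) := by
    intro a b hab hle
    have hpos : 0 < (b - a).val := ZMod.val_pos.2 (sub_ne_zero.2 hab.symm)
    refine ⟨(a.val, a.val + (b - a).val), ⟨?_, ?_⟩, by simp [proj]⟩ <;> dsimp <;> omega
  induction x with | _ a b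
  have hab : a ≠ b := hx
  have hval : (a - b).val + (b - a).val = m := by
    rw [← neg_sub b a, ZMod.neg_val, if_neg (sub_ne_zero.2 hab.symm),
      Nat.sub_add_cancel (ZMod.val_le _)]
  rcases le_total (2 * (b - a).val) m with hle | hle
  · exact of_val_le a b hab hle
  · rw [Sym2.eq_swap]
    exact of_val_le b a hab.symm (by omega)

-- The translation length need not be a multiple of `m`: an edge of length `m / 2` and its translate
-- by `m / 2` represent the same diameter.
lemma exists_shift_eq_of_proj_eq (he : IsShort m e) (hf : IsShort m f)
    (h : proj m e = proj m f) : ∃ s : ℤ, (m : ℤ) ∣ 2 * s ∧ shift e s = f := by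
  obtain ⟨he_lt, he_len⟩ := he
  obtain ⟨hf_lt, hf_len⟩ := hf
  simp only [proj, Sym2.eq_iff, ZMod.intCast_eq_intCast_iff_dvd_sub] at h
  rcases h with ⟨h₁, h₂⟩ | ⟨h₁, h₂⟩
  · have hlen : f.2 - e.2 - (f.1 - e.1) = 0 :=
      Int.eq_zero_of_abs_lt_dvd (dvd_sub h₂ h₁) (abs_lt.2 (by omega))
    exact ⟨f.1 - e.1, h₁.mul_left 2, Prod.ext (by simp [shift]) (by simp only [shift]; omega)⟩
  · have hle := Int.le_of_dvd (by omega) (dvd_sub h₁ h₂)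
    refine ⟨f.1 - e.1, ?_, Prod.ext (by simp [shift]) (by simp only [shift]; omega)⟩
    rw [show 2 * (f.1 - e.1) = f.2 - e.1 + (f.1 - e.2) by omega]
    exact dvd_add h₁ h₂

end PolygonEdges

section Projection

variable {n : ℕ} {E F : Set Edge} {U : Set (Sym2 (ZMod (4 * n)))} {e : Edge}

/-- `IsPolyAdmissible n U`: `U` is an `n`-periodic 3-crossing-free set of edges of the `4n`-gon. -/
structure IsPolyAdmissible (n : ℕ) (U : Set (Sym2 (ZMod (4 * n)))) : Prop where
  valid : PolyValid U
  periodic : PolyPeriodic n U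
  crossingFree : PolyCrossingFree 3 U

/-- The set of all short edges of `ℤ` representing an edge in `U`, a right inverse of `phi n`. -/
def lift (n : ℕ) (U : Set (Sym2 (ZMod (4 * n)))) : Set Edge :=
  {e | IsShort (4 * n) e ∧ proj (4 * n) e ∈ U}

lemma proj_mem_phi_iff (hn : 1 ≤ n) (hE : IsAdmissible n 2 E) (he : IsShort (4 * n) e) :
    proj (4 * n) e ∈ phi n E ↔ e ∈ E := by
  rw [phi_eq_image]
  refine ⟨?_, Set.mem_image_of_mem _⟩
  rintro ⟨f, hf, hproj⟩
  obtain ⟨s, ⟨t, ht⟩, rfl⟩ := exists_shift_eq_of_proj_eq (hE.isShort hn hf) he hproj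
  exact (hE.periodic.shift_mem_iff ⟨2 * t, by push_cast at ht; linarith⟩).2 hf

lemma lift_phi (hn : 1 ≤ n) (hE : IsAdmissible n 2 E) : lift n (phi n E) = E :=
  Set.ext fun _ => ⟨fun h => (proj_mem_phi_iff hn hE h.1).1 h.2,
    fun he => ⟨hE.isShort hn he, (proj_mem_phi_iff hn hE (hE.isShort hn he)).2 he⟩⟩

lemma phi_lift (hn : 1 ≤ n) (hU : PolyValid U) : phi n (lift n U) = U := by
  have : NeZero (4 * n) := ⟨by omega⟩
  rw [phi_eq_image]
  refine Set.Subset.antisymm (Set.image_subset_iff.2 fun _ he => he.2) fun x hx => ?_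
  obtain ⟨e, he, rfl⟩ := exists_isShort_proj_eq (hU x hx)
  exact ⟨e, ⟨he, hx⟩, rfl⟩

lemma IsAdmissible.phi (hn : 1 ≤ n) (hE : IsAdmissible n 2 E) : IsPolyAdmissible n (phi n E) where
  valid := by
    rintro _ ⟨e, he, rfl⟩
    exact (hE.isShort hn he).not_isDiag_proj
  periodic x := by
    rw [phi_eq_image]
    constructor
    · rintro ⟨e, he, rfl⟩
      exact ⟨shift e n, (hE.periodic e).1 he, by rw [proj_shift, Int.cast_natCast]⟩
    · rintro ⟨e, he, hproj⟩
      refine ⟨shift e (-n), (hE.periodic.shift_mem_iff (dvd_refl _).neg_right).2 he, ?_⟩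
      rw [proj_shift, hproj, Sym2.map_map]
      simp
  crossingFree := by
    have : NeZero (4 * n) := ⟨by omega⟩
    rw [polyCrossingFree_three_iff]
    rintro _ ⟨e, he, rfl⟩ _ ⟨f, hf, rfl⟩ _ ⟨g, hg, rfl⟩ hef heg hfg
    have hshort {e : Edge} (he : e ∈ E) := hE.isShort hn he
    have hshift {e : Edge} (t : ℤ) (he : e ∈ E) : shift e ((4 * n : ℕ) * t) ∈ E :=
      (hE.periodic.shift_mem_iff ⟨4 * t, by push_cast; ring⟩).2 he
    obtain ⟨r, hr⟩ := (hshort he).exists_crosses_shift (hshort hf) hef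
    obtain ⟨s, hs⟩ := (hshort he).exists_crosses_shift (hshort hg) heg
    obtain ⟨t, ht⟩ := (hshort hf).exists_crosses_shift (hshort hg) hfg
    refine hE.not_crosses_shift_mul hn he (hshift r hf) (hshift s hg) hr hs (t := t + r - s) ?_
    rw [← crosses_shift_iff (t := (4 * n : ℕ) * r)] at ht
    convert ht using 1
    simp only [shift_shift]
    congr 1
    push_cast
    ring

lemma IsPolyAdmissible.lift (hn : 1 ≤ n) (hU : IsPolyAdmissible n U) :
    IsAdmissible n 2 (lift n U) where
  valid e he := he.1.1
  periodic e := by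
    refine and_congr isShort_shift_iff.symm ?_
    rw [proj_shift, Int.cast_natCast]
    exact hU.periodic _
  crossingFree := by
    have : NeZero (4 * n) := ⟨by omega⟩
    have hfree := polyCrossingFree_three_iff.1 hU.crossingFree
    refine crossingFree_three_iff.2 fun e he f hf g hg hef heg hfg => ?_
    exact hfree _ he.2 _ hf.2 _ hg.2 (he.1.polyCrosses_proj hf.1 hef)
      (he.1.polyCrosses_proj hg.1 heg) (hf.1.polyCrosses_proj hg.1 hfg)

lemma phi_subset_phi_iff (hn : 1 ≤ n) (hE : IsAdmissible n 2 E) (hF : IsAdmissible n 2 F) :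
    phi n E ⊆ phi n F ↔ E ⊆ F := by
  refine ⟨fun h => ?_, fun h => ?_⟩
  · rw [← lift_phi hn hE, ← lift_phi hn hF]
    exact fun e he => ⟨he.1, h he.2⟩
  · rw [phi_eq_image]
    exact Set.image_mono h

lemma bijOn_phi_isAdmissible (hn : 1 ≤ n) :
    Set.BijOn (phi n) {E | IsAdmissible n 2 E} {U | IsPolyAdmissible n U} :=
  Set.InvOn.bijOn ⟨fun _ hE => lift_phi hn hE, fun _ hU => phi_lift hn hU.valid⟩
    (fun _ hE => hE.phi hn) (fun _ hU => hU.lift hn)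

lemma bijOn_phi_maximal (hn : 1 ≤ n) :
    Set.BijOn (phi n) {E | Maximal (IsAdmissible n 2) E} {U | Maximal (IsPolyAdmissible n) U} := by
  have hbij := bijOn_phi_isAdmissible hn
  have himage : (∃ E, IsAdmissible n 2 E ∧ phi n E = ·) = IsPolyAdmissible n :=
    funext fun U => propext (Set.ext_iff.1 hbij.image_eq U)
  rw [← himage, ← image_monotone_setOfPred_maximal fun _ _ hE hF => phi_subset_phi_iff hn hE hF]
  exact (hbij.injOn.mono fun _ hE => hE.prop).bijOn_image

lemma isPolyTriangulation_and_polyPeriodic_iff_maximal (hn : 1 ≤ n) :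
    IsPolyTriangulation U ∧ PolyPeriodic n U ↔ Maximal (IsPolyAdmissible n) U := by
  constructor
  · rintro ⟨⟨hvalid, hfree, hmax⟩, hper⟩
    exact maximal_subset_iff.2 ⟨⟨hvalid, hper, hfree⟩,
      fun V hV hUV => (hmax V hV.valid hV.crossingFree hUV).symm⟩
  intro hU
  have : NeZero (4 * n) := ⟨by omega⟩
  obtain ⟨E, hE, rfl⟩ := (bijOn_phi_maximal hn).surjOn hU
  refine ⟨⟨hU.prop.valid, hU.prop.crossingFree, fun V hvalid hfree hsub => ?_⟩, hU.prop.periodic⟩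
  refine Set.Subset.antisymm (fun x hx => ?_) hsub
  obtain ⟨e, he, rfl⟩ := exists_isShort_proj_eq (hvalid x hx)
  refine (proj_mem_phi_iff hn hE.prop he).2 (mem_of_compatible hn hE he ?_)
  intro f hf g hg hef heg hfg
  have hf_short := hE.prop.isShort hn hf
  have hg_short := hE.prop.isShort hn hg
  exact polyCrossingFree_three_iff.1 hfree _ hx _
    (hsub ((proj_mem_phi_iff hn hE.prop hf_short).2 hf)) _
    (hsub ((proj_mem_phi_iff hn hE.prop hg_short).2 hg)) (he.polyCrosses_proj hf_short hef)
    (he.polyCrosses_proj hg_short heg) (hf_short.polyCrosses_proj hg_short hfg)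

end Projection

/-- `φ` restricts to a bijection between `n`-periodic
2-triangulations on `ℤ` (equivalently, 2-triangulations on the half-cylinder
with `n` marked points) and `n`-periodic 2-triangulations on the `4n`-gon
(those invariant under rotation by `π/2`, i.e. `v ↦ v + n`). -/
theorem phi_bijection (n : ℕ) (hn : 1 ≤ n) :
    Set.BijOn (phi n) {T : Set Edge | IsTriangulation n 2 T}
      {T' : Set (Sym2 (ZMod (4 * n))) | IsPolyTriangulation T' ∧ PolyPeriodic n T'} := by
  simpa only [isTriangulation_iff_maximal, isPolyTriangulation_and_polyPeriodic_iff_maximal hn]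
    using bijOn_phi_maximal hn

end Multitriangulation
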